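/- Let I ⊆ ℝ be a bounded interval, let k be a positive integer, and let α ∈ (0,1]. For each g ∈ C^{k,α}(Ī, ℂ) there exists a measurable function Λ : I → [0,∞) such that |g'(t)| ≤ Λ(t) · |g(t)|^{1−1/(k+α)} for almost every t ∈ I, Λ belongs to the weak Lebesgue space L^p_w(I) where p = (k+α)/(k+α−1), and ‖Λ‖_{p,w,I} ≤ C(k) · max{ (Höld_{α,I}(g^{(k)}))^{1/(k+α)} |I|^{1/p}, ‖g'‖_{L^∞(I)}^{1/(k+α)} }, with a constant C(k) depending only on k. -/

import Mathlib

open Set MeasureTheory Real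

noncomputable section

/-- `f` is absolutely continuous on the set `S` : for every `ε > 0` there is `δ > 0` such
that for any finitely many non-overlapping intervals `[u i, v i] ⊆ S` of total length `< δ`
the sum `∑ ‖f (v i) - f (u i)‖` is `< ε`. -/
def AbsContOn {E : Type*} [NormedAddCommGroup E] (f : ℝ → E) (S : Set ℝ) : Prop :=
  ∀ ε : ℝ, 0 < ε → ∃ δ : ℝ, 0 < δ ∧
    ∀ (N : ℕ) (u v : Fin N → ℝ),
      (∀ i, u i ≤ v i ∧ Set.Icc (u i) (v i) ⊆ S) →
      (∀ i j, i ≠ j → Disjoint (Set.Ioo (u i) (v i)) (Set.Ioo (u j) (v j))) →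
      (∑ i, (v i - u i)) < δ →
      (∑ i, ‖f (v i) - f (u i)‖) < ε

/-- `d (i+1)` is the derivative of `d i` on `S` for all `i < k`; thus `d i` is the `i`-th
derivative of `d 0` on `S` for `i ≤ k`. -/
def DerivChain {E : Type*} [NormedAddCommGroup E] [NormedSpace ℝ E]
    (d : ℕ → ℝ → E) (k : ℕ) (S : Set ℝ) : Prop :=
  ∀ i < k, ∀ x ∈ S, HasDerivWithinAt (d i) (d (i + 1) x) S x

/-- Hölder constant of exponent `a` of `g` on `S`. -/
def HolderConst {E : Type*} [NormedAddCommGroup E] (a : ℝ) (S : Set ℝ) (g : ℝ → E) : ℝ :=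
  sSup {r : ℝ | ∃ x ∈ S, ∃ y ∈ S, x ≠ y ∧ r = ‖g x - g y‖ / |x - y| ^ a}

/-- Membership in `C^{k,1}(S)`, encoded via the chain of derivatives `d`:
`d 0` is `k` times differentiable with `i`-th derivative `d i`, and the top
derivative `d k` is Lipschitz. -/
def MemCk1 {E : Type*} [NormedAddCommGroup E] [NormedSpace ℝ E]
    (d : ℕ → ℝ → E) (k : ℕ) (S : Set ℝ) : Prop :=
  DerivChain d k S ∧ ∃ L : ℝ, ∀ x ∈ S, ∀ y ∈ S, ‖d k x - d k y‖ ≤ L * |x - y|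

/-- The `C^{k,1}`-norm: sup of all derivatives up to order `k` plus the Lipschitz
(Hölder-1) constant of the `k`-th derivative. -/
def CNorm {E : Type*} [NormedAddCommGroup E] (d : ℕ → ℝ → E) (k : ℕ) (S : Set ℝ) : ℝ :=
  sSup {r : ℝ | ∃ i ≤ k, ∃ x ∈ S, r = ‖d i x‖} + HolderConst 1 S (d k)

/-!
Fix `s = k + α` and a real function `f`. Where `f' ≠ 0` and `|f| ^ (1 - 1 / s) < |f'| ≤ A`, the
function `|f| ^ (1 / s)` is bounded by `A ^ (1 / (s - 1))` and has derivative at least `1 / s` in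
absolute value. So on an interval where `f'` has fewer than `k` zeros, hence at most `k` intervals
of monotonicity, the inequality `|f'| ≤ |f| ^ (1 - 1 / s)` fails on a set of measure at most
`2 * k * s * A ^ (1 / (s - 1))`. If `f'` has at least `k` zeros on an interval of length `ℓ`, then
Rolle's theorem and the mean value inequality give `|f'| ≤ H * ℓ ^ (s - 1)`, where `H` is the Hölder
constant of the `k`-th derivative. Such an interval is bisected: a half with fewer than `k` zeros
contributes at most a multiple of `H ^ (1 / (s - 1)) * ℓ`, and as this is linear in its length the
contributions sum up. A complex function is treated through its real and imaginary parts, and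
replacing `f` by a multiple of `f` turns the measure bound into the weak `L^p` bound.
-/

section Rolle

lemma encard_inter_fiber_le_encard_inter_zeros_deriv_add_one {f f' : ℝ → ℝ} {S : Set ℝ}
    (hS : S.OrdConnected) (hf : ∀ t ∈ S, HasDerivWithinAt f (f' t) S t) (c : ℝ) :
    (S ∩ f ⁻¹' {c}).encard ≤ (S ∩ f' ⁻¹' {0}).encard + 1 := by
  rcases (S ∩ f' ⁻¹' {0}).finite_or_infinite with hfin | hinf
  · by_contra! hlt
    obtain ⟨T, hTsub, hTcard⟩ := exists_subset_encard_eq (Order.add_one_le_of_lt hlt)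
    rw [hfin.encard_eq_coe_toFinset_card] at hTcard
    have hTfin : T.Finite := finite_of_encard_eq_coe (k := hfin.toFinset.card + 1 + 1) hTcard
    rw [hTfin.encard_eq_coe_toFinset_card] at hTcard
    have hinter : hTfin.toFinset.card ≤ hfin.toFinset.card + 1 := by
      refine Finset.card_le_of_interleaved fun x hx y hy hxy _ ↦ ?_
      obtain ⟨hxS, hxc⟩ := hTsub (hTfin.mem_toFinset.1 hx)
      obtain ⟨hyS, hyc⟩ := hTsub (hTfin.mem_toFinset.1 hy)
      have hsub : Icc x y ⊆ S := hS.out hxS hyS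
      obtain ⟨z, hz, hz0⟩ := exists_hasDerivAt_eq_zero hxy
        (fun t ht ↦ ((hf t (hsub ht)).mono hsub).continuousWithinAt) (hxc.trans hyc.symm)
        fun t ht ↦ ((hf t (hsub (Ioo_subset_Icc_self ht))).mono hsub).hasDerivAt
          (Icc_mem_nhds ht.1 ht.2)
      exact ⟨z, hfin.mem_toFinset.2 ⟨hsub (Ioo_subset_Icc_self hz), hz0⟩, hz.1, hz.2⟩
    have : hTfin.toFinset.card = hfin.toFinset.card + 1 + 1 := by exact_mod_cast hTcard
    omega
  · simp [hinf.encard_eq]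

lemma injOn_of_hasDerivWithinAt_ne_zero {f f' : ℝ → ℝ} {S : Set ℝ} (hS : S.OrdConnected)
    (hf : ∀ t ∈ S, HasDerivWithinAt f (f' t) S t) (hne : ∀ t ∈ S, f' t ≠ 0) : InjOn f S := by
  intro u hu v hv huv
  have hempty : S ∩ f' ⁻¹' {0} = ∅ := eq_empty_of_forall_notMem fun t ht ↦ hne t ht.1 ht.2
  have hcard := encard_inter_fiber_le_encard_inter_zeros_deriv_add_one hS hf (f v)
  rw [hempty, encard_empty, zero_add, encard_le_one_iff] at hcard
  exact hcard u v ⟨hu, huv⟩ ⟨hv, rfl⟩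

end Rolle

namespace DerivChain

variable {E F : Type*} [NormedAddCommGroup E] [NormedSpace ℝ E] [NormedAddCommGroup F]
  [NormedSpace ℝ F] {k : ℕ} {S T : Set ℝ}

lemma mono {d : ℕ → ℝ → E} (hd : DerivChain d k S) (hTS : T ⊆ S) : DerivChain d k T :=
  fun i hi t ht ↦ (hd i hi t (hTS ht)).mono hTS

lemma clm_comp {d : ℕ → ℝ → E} (hd : DerivChain d k S) (L : E →L[ℝ] F) :
    DerivChain (fun i t ↦ L (d i t)) k S :=
  fun i hi t ht ↦ L.hasFDerivAt.comp_hasDerivWithinAt t (hd i hi t ht)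

lemma continuousOn {d : ℕ → ℝ → E} (hd : DerivChain d k S) (hdk : ContinuousOn (d k) S) {i : ℕ}
    (hi : i ≤ k) : ContinuousOn (d i) S := by
  rcases hi.eq_or_lt with rfl | hik
  · exact hdk
  · exact fun t ht ↦ (hd i hik t ht).continuousWithinAt

lemma exists_zero_of_le_encard {d : ℕ → ℝ → ℝ} (hd : DerivChain d k S) (hS : S.OrdConnected)
    (hk : (k : ℕ∞) ≤ (S ∩ d 1 ⁻¹' {0}).encard) {j : ℕ} (hj : 1 ≤ j) (hjk : j ≤ k) :
    ∃ z ∈ S, d j z = 0 := by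
  have hcount : (k : ℕ∞) + 1 ≤ (S ∩ d j ⁻¹' {0}).encard + j := by
    induction j, hj using Nat.le_induction with
    | base => exact_mod_cast add_le_add_left hk 1
    | succ j _ ih =>
      calc (k : ℕ∞) + 1 ≤ (S ∩ d j ⁻¹' {0}).encard + j := ih (by omega)
        _ ≤ (S ∩ d (j + 1) ⁻¹' {0}).encard + 1 + j := by
          gcongr
          exact encard_inter_fiber_le_encard_inter_zeros_deriv_add_one hS (hd j hjk) 0
        _ = (S ∩ d (j + 1) ⁻¹' {0}).encard + (j + 1 : ℕ) := by push_cast; ring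
  by_contra! hne
  have hempty : S ∩ d j ⁻¹' {0} = ∅ := eq_empty_of_forall_notMem fun t ht ↦ hne t ht.1 ht.2
  rw [hempty, encard_empty, zero_add] at hcount
  have : k + 1 ≤ j := by exact_mod_cast hcount
  omega

end DerivChain

/-- `d` is the chain of derivatives of a `C^{k,α}` function on `S` whose `k`-th derivative has
`α`-Hölder constant at most `H`. -/
structure HolderChain {E : Type*} [NormedAddCommGroup E] [NormedSpace ℝ E] (d : ℕ → ℝ → E) (k : ℕ)
    (α H : ℝ) (S : Set ℝ) : Prop where
  derivChain : DerivChain d k S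
  norm_sub_le : ∀ u ∈ S, ∀ v ∈ S, ‖d k u - d k v‖ ≤ H * |u - v| ^ α

namespace HolderChain

variable {E F : Type*} [NormedAddCommGroup E] [NormedSpace ℝ E] [NormedAddCommGroup F]
  [NormedSpace ℝ F] {k : ℕ} {α H : ℝ} {S T : Set ℝ}

lemma mono {d : ℕ → ℝ → E} (hd : HolderChain d k α H S) (hTS : T ⊆ S) : HolderChain d k α H T :=
  ⟨hd.derivChain.mono hTS, fun u hu v hv ↦ hd.norm_sub_le u (hTS hu) v (hTS hv)⟩

lemma clm_comp {d : ℕ → ℝ → E} (hd : HolderChain d k α H S) {L : E →L[ℝ] F} {c : ℝ}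
    (hL : ‖L‖ ≤ c) : HolderChain (fun i t ↦ L (d i t)) k α (c * H) S := by
  refine ⟨hd.derivChain.clm_comp L, fun u hu v hv ↦ ?_⟩
  rw [← map_sub, mul_assoc]
  exact L.le_of_opNorm_le_of_le hL (hd.norm_sub_le u hu v hv)

lemma continuousOn {d : ℕ → ℝ → E} (hd : HolderChain d k α H S) (hα : 0 < α) {i : ℕ}
    (hi : i ≤ k) : ContinuousOn (d i) S := by
  refine hd.derivChain.continuousOn (fun t ht ↦ ?_) hi
  have hlim : Continuous fun u ↦ H * |u - t| ^ α :=
    continuous_const.mul ((continuous_id.sub continuous_const).abs.rpow_const fun _ ↦ .inr hα.le)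
  have hlim_zero := hlim.tendsto t
  rw [sub_self, abs_zero, Real.zero_rpow hα.ne', mul_zero] at hlim_zero
  rw [ContinuousWithinAt, tendsto_iff_norm_sub_tendsto_zero]
  exact squeeze_zero' (.of_forall fun _ ↦ norm_nonneg _)
    (eventually_mem_nhdsWithin.mono fun u hu ↦ hd.norm_sub_le u hu t ht)
    (hlim_zero.mono_left nhdsWithin_le_nhds)

/- The bound propagates down from the `k`-th derivative by the mean value inequality, each
derivative being compared with its value at one of its zeros. -/
lemma norm_le_of_exists_zero {d : ℕ → ℝ → E} (hd : HolderChain d k α H S) (hS : S.OrdConnected)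
    {ℓ : ℝ} (hH : 0 ≤ H) (hα : 0 ≤ α) (hℓ : 0 < ℓ) (hdist : ∀ u ∈ S, ∀ v ∈ S, |u - v| ≤ ℓ)
    (hzero : ∀ j, 1 ≤ j → j ≤ k → ∃ z ∈ S, d j z = 0) {j : ℕ} (hj : j < k) :
    ∀ t ∈ S, ‖d (k - j) t‖ ≤ H * ℓ ^ (j + α) := by
  induction j with
  | zero =>
    intro t ht
    obtain ⟨z, hz, hz0⟩ := hzero k hj le_rfl
    calc ‖d k t‖ = ‖d k t - d k z‖ := by rw [hz0, sub_zero]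
      _ ≤ H * |t - z| ^ α := hd.norm_sub_le t ht z hz
      _ ≤ H * ℓ ^ ((0 : ℕ) + α) := by
        rw [Nat.cast_zero, zero_add]
        gcongr
        exact hdist t ht z hz
  | succ j ih =>
    intro t ht
    obtain ⟨z, hz, hz0⟩ := hzero (k - (j + 1)) (by omega) (by omega)
    have hderiv : ∀ u ∈ S, HasDerivWithinAt (d (k - (j + 1))) (d (k - j) u) S u := by
      have hd' := hd.derivChain (k - (j + 1)) (by omega)
      rwa [show k - (j + 1) + 1 = k - j by omega] at hd'
    calc ‖d (k - (j + 1)) t‖ = ‖d (k - (j + 1)) t - d (k - (j + 1)) z‖ := by rw [hz0, sub_zero]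
      _ ≤ H * ℓ ^ (j + α) * ‖t - z‖ :=
        hS.convex.norm_image_sub_le_of_norm_hasDerivWithin_le hderiv (ih (by omega)) hz ht
      _ ≤ H * ℓ ^ (j + α) * ℓ := by
        gcongr
        exact hdist t ht z hz
      _ = H * ℓ ^ ((j + 1 : ℕ) + α) := by
        rw [mul_assoc, ← Real.rpow_add_one hℓ.ne']
        push_cast
        ring_nf

lemma norm_deriv_le_of_le_encard {d : ℕ → ℝ → ℝ} (hd : HolderChain d k α H S)
    (hS : S.OrdConnected) (hk : 1 ≤ k) {ℓ : ℝ} (hH : 0 ≤ H) (hα : 0 ≤ α) (hℓ : 0 < ℓ)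
    (hdist : ∀ u ∈ S, ∀ v ∈ S, |u - v| ≤ ℓ)
    (hzeros : (k : ℕ∞) ≤ (S ∩ d 1 ⁻¹' {0}).encard) :
    ∀ t ∈ S, ‖d 1 t‖ ≤ H * ℓ ^ (k + α - 1) := by
  have hbound := hd.norm_le_of_exists_zero hS hH hα hℓ hdist
    (fun j hj hjk ↦ hd.derivChain.exists_zero_of_le_encard hS hzeros hj hjk) (j := k - 1) (by omega)
  rwa [Nat.sub_sub_self hk, Nat.cast_sub hk, Nat.cast_one,
    show (k : ℝ) - 1 + α = k + α - 1 by ring] at hbound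

end HolderChain

section HolderConst

variable {E : Type*} [NormedAddCommGroup E] {a : ℝ} {S : Set ℝ} {g : ℝ → E}

lemma holderConst_nonneg : 0 ≤ HolderConst a S g := by
  refine Real.sSup_nonneg ?_
  rintro _ ⟨x, _, y, _, _, rfl⟩
  positivity

lemma norm_sub_le_holderConst_mul
    (hg : ∃ H : ℝ, ∀ x ∈ S, ∀ y ∈ S, ‖g x - g y‖ ≤ H * |x - y| ^ a) :
    ∀ x ∈ S, ∀ y ∈ S, ‖g x - g y‖ ≤ HolderConst a S g * |x - y| ^ a := by
  obtain ⟨H, hH⟩ := hg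
  have hpos {x y : ℝ} (hxy : x ≠ y) : 0 < |x - y| ^ a :=
    Real.rpow_pos_of_pos (abs_pos.2 (sub_ne_zero.2 hxy)) a
  have hbdd : BddAbove {r : ℝ | ∃ x ∈ S, ∃ y ∈ S, x ≠ y ∧ r = ‖g x - g y‖ / |x - y| ^ a} := by
    refine ⟨H, ?_⟩
    rintro _ ⟨x, hx, y, hy, hxy, rfl⟩
    exact (div_le_iff₀ (hpos hxy)).2 (hH x hx y hy)
  intro x hx y hy
  rcases eq_or_ne x y with rfl | hxy
  · simpa using mul_nonneg holderConst_nonneg (Real.rpow_nonneg (abs_nonneg (x - x)) a)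
  · exact (div_le_iff₀ (hpos hxy)).1 (le_csSup hbdd ⟨x, hx, y, hy, hxy, rfl⟩)

end HolderConst

lemma volume_le_ofReal_inv_mul_volume_image {φ φ' : ℝ → ℝ} {S : Set ℝ} {c : ℝ} (hc : 0 < c)
    (hS : MeasurableSet S) (hφ : ∀ t ∈ S, HasDerivWithinAt φ (φ' t) S t) (hinj : InjOn φ S)
    (hcφ : ∀ t ∈ S, c ≤ |φ' t|) : volume S ≤ ENNReal.ofReal c⁻¹ * volume (φ '' S) := by
  have hchange := lintegral_image_eq_lintegral_abs_deriv_mul hS hφ hinj fun _ ↦ 1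
  simp only [mul_one, lintegral_one, Measure.restrict_apply_univ] at hchange
  calc volume S = ENNReal.ofReal c⁻¹ * ∫⁻ _ in S, ENNReal.ofReal c := by
        rw [setLIntegral_const, ← mul_assoc, ← ENNReal.ofReal_mul (inv_pos.2 hc).le,
          inv_mul_cancel₀ hc.ne', ENNReal.ofReal_one, one_mul]
    _ ≤ ENNReal.ofReal c⁻¹ * volume (φ '' S) := by
      rw [hchange]
      exact mul_le_mul_right
        (setLIntegral_mono' hS fun t ht ↦ ENNReal.ofReal_le_ofReal (hcφ t ht)) _

lemma volume_inter_Ioo_le_add (E : Set ℝ) (x z y : ℝ) :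
    volume (E ∩ Ioo x y) ≤ volume (E ∩ Ioo x z) + volume (E ∩ Ioo z y) := by
  have hsub : E ∩ Ioo x y ⊆ E ∩ Ioo x z ∪ E ∩ Ioo z y ∪ {z} := by
    rintro t ⟨htE, htx, hty⟩
    rcases lt_trichotomy t z with h | h | h
    · exact .inl (.inl ⟨htE, htx, h⟩)
    · exact .inr h
    · exact .inl (.inr ⟨htE, h, hty⟩)
  calc volume (E ∩ Ioo x y) ≤ volume (E ∩ Ioo x z ∪ E ∩ Ioo z y ∪ {z}) := measure_mono hsub
    _ ≤ volume (E ∩ Ioo x z ∪ E ∩ Ioo z y) + volume {z} := measure_union_le _ _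
    _ ≤ volume (E ∩ Ioo x z) + volume (E ∩ Ioo z y) := by
      rw [Real.volume_singleton, add_zero]
      exact measure_union_le _ _

-- `P` selects the intervals that are still to be halved; below length `δ` nothing is left to do.
lemma volume_inter_Ioo_le_of_bisection {E : Set ℝ} {P : ℝ → ℝ → Prop} {K : ENNReal} {δ : ℝ}
    (hδ : 0 < δ) (hsmall : ∀ x y, P x y → y - x ≤ δ → volume (E ∩ Ioo x y) = 0)
    (hhalf : ∀ x y, P x y → ∀ u v, x ≤ u → v ≤ y → v - u = (y - x) / 2 →
      P u v ∨ volume (E ∩ Ioo u v) ≤ K * ENNReal.ofReal (v - u))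
    {x y : ℝ} (hxy : x ≤ y) (hP : P x y) :
    volume (E ∩ Ioo x y) ≤ K * ENNReal.ofReal (y - x) := by
  obtain ⟨n, hn⟩ := pow_unbounded_of_one_lt ((y - x) / δ) (one_lt_two (α := ℝ))
  replace hn : y - x ≤ 2 ^ n * δ := ((div_lt_iff₀ hδ).1 hn).le
  induction n generalizing x y with
  | zero => simp [hsmall x y hP (by simpa using hn)]
  | succ n ih =>
    have hpiece (u v : ℝ) (hxu : x ≤ u) (hvy : v ≤ y) (hvu : v - u = (y - x) / 2) :
        volume (E ∩ Ioo u v) ≤ K * ENNReal.ofReal ((y - x) / 2) := by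
      rw [← hvu]
      refine (hhalf x y hP u v hxu hvy hvu).elim (fun h ↦ ih (by linarith) h ?_) id
      rw [pow_succ] at hn
      linarith
    calc volume (E ∩ Ioo x y)
        ≤ volume (E ∩ Ioo x ((x + y) / 2)) + volume (E ∩ Ioo ((x + y) / 2) y) :=
          volume_inter_Ioo_le_add E x _ y
      _ ≤ K * ENNReal.ofReal ((y - x) / 2) + K * ENNReal.ofReal ((y - x) / 2) := by
        gcongr
        · exact hpiece _ _ le_rfl (by linarith) (by ring)
        · exact hpiece _ _ (by linarith) le_rfl (by ring)
      _ = K * ENNReal.ofReal (y - x) := by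
        have h2 : 0 ≤ (y - x) / 2 := by linarith
        rw [← mul_add, ← ENNReal.ofReal_add h2 h2, add_halves]

lemma countable_setOf_eq_zero_and_deriv_ne_zero {F : Type*} [NormedAddCommGroup F]
    [NormedSpace ℝ F] {g g' : ℝ → F} {S : Set ℝ} (hg : ∀ t ∈ S, HasDerivWithinAt g (g' t) S t) :
    {t ∈ S | g t = 0 ∧ g' t ≠ 0}.Countable := by
  refine (HereditarilyLindelofSpace.isLindelof _).countable_of_isDiscrete ?_
  rw [isDiscrete_iff_nhdsNE]
  rintro t ⟨htS, _, hgt'⟩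
  rw [← disjoint_iff, Filter.disjoint_principal_right]
  have hne := eventually_nhdsWithin_iff.1 ((hg t htS).eventually_ne (c := 0) hgt')
  exact eventually_nhdsWithin_iff.2 (hne.mono fun u hu hut huT ↦ hu ⟨huT.1, hut⟩ huT.2.1)

lemma rpow_inv_le_of_rpow_one_sub_inv_le {s x A : ℝ} (hs : 1 < s) (hx : 0 ≤ x)
    (h : x ^ (1 - s⁻¹) ≤ A) : x ^ s⁻¹ ≤ A ^ (s - 1)⁻¹ := by
  have hs1 : 0 < s - 1 := sub_pos.2 hs
  calc x ^ s⁻¹ = (x ^ (1 - s⁻¹)) ^ (s - 1)⁻¹ := by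
        rw [← Real.rpow_mul hx]
        congr 1
        field_simp
    _ ≤ A ^ (s - 1)⁻¹ := by gcongr

lemma inv_le_abs_mul_rpow {s x x' : ℝ} (hs : 0 < s) (hx : 0 < x) (h : x ^ (1 - s⁻¹) ≤ |x'|) :
    s⁻¹ ≤ |x' * s⁻¹ * x ^ (s⁻¹ - 1)| :=
  calc s⁻¹ = x ^ (1 - s⁻¹) * s⁻¹ * x ^ (s⁻¹ - 1) := by
        rw [mul_right_comm, ← Real.rpow_add hx, sub_add_sub_cancel, sub_self, Real.rpow_zero,
          one_mul]
    _ ≤ |x'| * s⁻¹ * x ^ (s⁻¹ - 1) := by gcongr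
    _ = |x' * s⁻¹ * x ^ (s⁻¹ - 1)| := by
      rw [abs_mul, abs_mul, abs_of_pos (inv_pos.2 hs), abs_of_pos (Real.rpow_pos_of_pos hx _)]

/-- The set where Glaeser's inequality `|f'| ≤ |f| ^ (1 - 1 / s)` fails. A constant in front of
the right-hand side is absorbed by rescaling `f`, see `glaeserSet.mem_mul_iff`. -/
def glaeserSet (f f' : ℝ → ℝ) (s : ℝ) : Set ℝ := {t | |f t| ^ (1 - s⁻¹) < |f' t|}

namespace glaeserSet

variable {f f' : ℝ → ℝ} {s A : ℝ}

lemma mem_mul_iff {c t : ℝ} (hs : s ≠ 0) (hc : 0 < c) :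
    t ∈ glaeserSet (fun t ↦ c ^ s * f t) (fun t ↦ c ^ s * f' t) s ↔
      |f t| ^ (1 - s⁻¹) < c * |f' t| := by
  have hcs : 0 < c ^ s := Real.rpow_pos_of_pos hc s
  have hpow : (c ^ s) ^ (1 - s⁻¹) = c ^ (s - 1) := by
    rw [← Real.rpow_mul hc.le, mul_sub, mul_one, mul_inv_cancel₀ hs]
  have hsplit : c ^ s = c ^ (s - 1) * c := by
    rw [← Real.rpow_add_one hc.ne', sub_add_cancel]
  simp only [glaeserSet, mem_ofPred_eq]
  rw [abs_mul, abs_mul, abs_of_pos hcs, Real.mul_rpow hcs.le (abs_nonneg _), hpow, hsplit,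
    mul_assoc, mul_lt_mul_iff_right₀ (Real.rpow_pos_of_pos hc _)]

variable {U : Set ℝ}

lemma isOpen_inter (hs : 1 ≤ s) (hU : IsOpen U) (hf : ContinuousOn f U)
    (hf' : ContinuousOn f' U) : IsOpen (U ∩ glaeserSet f f' s) := by
  have hexp : 0 ≤ 1 - s⁻¹ := sub_nonneg.2 (inv_le_one_of_one_le₀ hs)
  have hdiff : ContinuousOn (fun t ↦ |f' t| - |f t| ^ (1 - s⁻¹)) U :=
    hf'.abs.sub (hf.abs.rpow_const fun _ _ ↦ .inr hexp)
  convert hdiff.isOpen_inter_preimage hU (isOpen_Ioi (a := 0)) using 2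
  ext t
  simp [glaeserSet]

/- On this set `φ = f ^ (1 / s)` has derivative at least `1 / s` in absolute value, and it takes
values in an interval of length `A ^ (1 / (s - 1))`. -/
lemma volume_inter_pos_le (hs : 1 < s) (hU : IsOpen U)
    (hf : ∀ t ∈ U, HasDerivWithinAt f (f' t) U t) (hf' : ContinuousOn f' U) (hinj : InjOn f U)
    (hA : ∀ t ∈ U, |f' t| ≤ A) :
    volume (glaeserSet f f' s ∩ (U ∩ f ⁻¹' Ioi 0)) ≤ ENNReal.ofReal (s * A ^ (s - 1)⁻¹) := by
  set S := glaeserSet f f' s ∩ (U ∩ f ⁻¹' Ioi 0)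
  have hs0 : 0 < s := by linarith
  have hSU : S ⊆ U := fun t ht ↦ ht.2.1
  have hpos : ∀ t ∈ S, 0 < f t := fun t ht ↦ ht.2.2
  have hlt : ∀ t ∈ S, f t ^ (1 - s⁻¹) < |f' t| := fun t ht ↦ by
    simpa [glaeserSet, abs_of_pos (hpos t ht)] using ht.1
  have hfcont : ContinuousOn f U := fun t ht ↦ (hf t ht).continuousWithinAt
  have hSmeas : MeasurableSet S := by
    have hopen := (isOpen_inter hs.le hU hfcont hf').inter
      (hfcont.isOpen_inter_preimage hU (isOpen_Ioi (a := 0)))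
    rw [← inter_inter_distrib_left, inter_left_comm] at hopen
    exact hopen.measurableSet
  have hderiv : ∀ t ∈ S, HasDerivWithinAt (fun t ↦ f t ^ s⁻¹)
      (f' t * s⁻¹ * f t ^ (s⁻¹ - 1)) S t := fun t ht ↦
    ((hf t (hSU ht)).mono hSU).rpow_const (.inl (hpos t ht).ne')
  have hφinj : InjOn (fun t ↦ f t ^ s⁻¹) S := fun u hu v hv huv ↦
    hinj (hSU hu) (hSU hv)
      ((Real.rpow_left_inj (hpos u hu).le (hpos v hv).le (inv_ne_zero hs0.ne')).1 huv)
  have himage : (fun t ↦ f t ^ s⁻¹) '' S ⊆ Icc 0 (A ^ (s - 1)⁻¹) := by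
    rintro _ ⟨t, ht, rfl⟩
    exact ⟨Real.rpow_nonneg (hpos t ht).le _,
      rpow_inv_le_of_rpow_one_sub_inv_le hs (hpos t ht).le ((hlt t ht).le.trans (hA t (hSU ht)))⟩
  calc volume S ≤ ENNReal.ofReal s⁻¹⁻¹ * volume ((fun t ↦ f t ^ s⁻¹) '' S) :=
        volume_le_ofReal_inv_mul_volume_image (inv_pos.2 hs0) hSmeas hderiv hφinj fun t ht ↦
          inv_le_abs_mul_rpow hs0 (hpos t ht) (hlt t ht).le
    _ ≤ ENNReal.ofReal s⁻¹⁻¹ * volume (Icc 0 (A ^ (s - 1)⁻¹)) := by gcongr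
    _ = ENNReal.ofReal (s * A ^ (s - 1)⁻¹) := by
      rw [Real.volume_Icc, sub_zero, inv_inv, ENNReal.ofReal_mul hs0.le]

lemma volume_inter_le_of_injOn (hs : 1 < s) (hU : IsOpen U)
    (hf : ∀ t ∈ U, HasDerivWithinAt f (f' t) U t) (hf' : ContinuousOn f' U) (hinj : InjOn f U)
    (hA : ∀ t ∈ U, |f' t| ≤ A) :
    volume (glaeserSet f f' s ∩ U) ≤ 2 * ENNReal.ofReal (s * A ^ (s - 1)⁻¹) := by
  have hpos := volume_inter_pos_le hs hU hf hf' hinj hA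
  have hneg := volume_inter_pos_le (f := -f) (f' := -f') hs hU (fun t ht ↦ (hf t ht).neg) hf'.neg
    (neg_injective.comp_injOn hinj) (by simpa using hA)
  have hzero : volume (U ∩ f ⁻¹' {0}) = 0 :=
    Set.Subsingleton.measure_zero
      (fun u hu v hv ↦ hinj hu.1 hv.1 (hu.2.trans hv.2.symm)) volume
  have hsub : glaeserSet f f' s ∩ U ⊆ glaeserSet f f' s ∩ (U ∩ f ⁻¹' Ioi 0) ∪
      glaeserSet (-f) (-f') s ∩ (U ∩ (-f) ⁻¹' Ioi 0) ∪ U ∩ f ⁻¹' {0} := by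
    rintro t ⟨ht, htU⟩
    rcases lt_trichotomy (f t) 0 with h | h | h
    · exact .inl (.inr ⟨by simpa [glaeserSet] using ht, htU, by simpa using h⟩)
    · exact .inr ⟨htU, h⟩
    · exact .inl (.inl ⟨ht, htU, h⟩)
  calc volume (glaeserSet f f' s ∩ U)
      ≤ volume (glaeserSet f f' s ∩ (U ∩ f ⁻¹' Ioi 0)) +
        volume (glaeserSet (-f) (-f') s ∩ (U ∩ (-f) ⁻¹' Ioi 0)) + volume (U ∩ f ⁻¹' {0}) :=
      (measure_mono hsub).trans ((measure_union_le _ _).trans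
        (add_le_add_left (measure_union_le _ _) _))
    _ ≤ 2 * ENNReal.ofReal (s * A ^ (s - 1)⁻¹) := by
      rw [hzero, add_zero, two_mul]
      exact add_le_add hpos hneg

section Interval

variable {x y : ℝ}

lemma volume_inter_Ioo_le_of_ne_zero (hs : 1 < s)
    (hf : ∀ t ∈ Ioo x y, HasDerivWithinAt f (f' t) (Ioo x y) t)
    (hf' : ContinuousOn f' (Ioo x y)) (hA : ∀ t ∈ Ioo x y, |f' t| ≤ A)
    (hne : ∀ t ∈ Ioo x y, f' t ≠ 0) :
    volume (glaeserSet f f' s ∩ Ioo x y) ≤ 2 * ENNReal.ofReal (s * A ^ (s - 1)⁻¹) :=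
  volume_inter_le_of_injOn hs isOpen_Ioo hf hf'
    (injOn_of_hasDerivWithinAt_ne_zero ordConnected_Ioo hf hne) hA

lemma volume_inter_Ioo_le_of_zeros_subset (hs : 1 < s) (T : Finset ℝ)
    (hf : ∀ t ∈ Ioo x y, HasDerivWithinAt f (f' t) (Ioo x y) t)
    (hf' : ContinuousOn f' (Ioo x y)) (hA : ∀ t ∈ Ioo x y, |f' t| ≤ A)
    (hT : Ioo x y ∩ f' ⁻¹' {0} ⊆ T) :
    volume (glaeserSet f f' s ∩ Ioo x y) ≤
      (T.card + 1) * (2 * ENNReal.ofReal (s * A ^ (s - 1)⁻¹)) := by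
  induction T using Finset.induction_on_max generalizing x y with
  | empty =>
    simpa using volume_inter_Ioo_le_of_ne_zero hs hf hf' hA fun t ht h0 ↦ by simpa using hT ⟨ht, h0⟩
  | insert z T hz ih =>
    rw [Finset.coe_insert] at hT
    rw [Finset.card_insert_of_notMem fun h ↦ (hz z h).false]
    by_cases hzmem : z ∈ Ioo x y
    · have hl : Ioo x z ⊆ Ioo x y := Ioo_subset_Ioo_right hzmem.2.le
      have hr : Ioo z y ⊆ Ioo x y := Ioo_subset_Ioo_left hzmem.1.le
      have hleft := ih (fun t ht ↦ (hf t (hl ht)).mono hl) (hf'.mono hl) (fun t ht ↦ hA t (hl ht))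
        fun t ht ↦ (hT ⟨hl ht.1, ht.2⟩).resolve_left ht.1.2.ne
      have hright := volume_inter_Ioo_le_of_ne_zero hs (fun t ht ↦ (hf t (hr ht)).mono hr)
        (hf'.mono hr) (fun t ht ↦ hA t (hr ht)) fun t ht h0 ↦
          (hT ⟨hr ht, h0⟩).elim ht.1.ne' fun h ↦ ht.1.not_gt (hz t h)
      calc volume (glaeserSet f f' s ∩ Ioo x y)
          ≤ volume (glaeserSet f f' s ∩ Ioo x z) + volume (glaeserSet f f' s ∩ Ioo z y) :=
            volume_inter_Ioo_le_add _ x z y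
        _ ≤ _ := add_le_add hleft hright
        _ = _ := by push_cast; ring
    · refine (ih hf hf' hA fun t ht ↦ (hT ht).resolve_left fun h ↦ hzmem (h ▸ ht.1)).trans ?_
      gcongr
      omega

lemma volume_inter_Ioo_le_of_encard_zeros_lt (hs : 1 < s)
    (hf : ∀ t ∈ Ioo x y, HasDerivWithinAt f (f' t) (Ioo x y) t)
    (hf' : ContinuousOn f' (Ioo x y)) (hA : ∀ t ∈ Ioo x y, |f' t| ≤ A) {k : ℕ}
    (hk : (Ioo x y ∩ f' ⁻¹' {0}).encard < k) :
    volume (glaeserSet f f' s ∩ Ioo x y) ≤ k * (2 * ENNReal.ofReal (s * A ^ (s - 1)⁻¹)) := by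
  have hfin : (Ioo x y ∩ f' ⁻¹' {0}).Finite := finite_of_encard_le_coe hk.le
  rw [hfin.encard_eq_coe_toFinset_card, Nat.cast_lt] at hk
  refine (volume_inter_Ioo_le_of_zeros_subset hs hfin.toFinset hf hf' hA (by simp)).trans ?_
  gcongr
  exact_mod_cast hk

lemma volume_inter_Ioo_le_of_abs_deriv_le_mul_rpow (hs : 1 < s)
    (hf : ∀ t ∈ Ioo x y, HasDerivWithinAt f (f' t) (Ioo x y) t)
    (hf' : ContinuousOn f' (Ioo x y)) {H ℓ : ℝ} (hH : 0 ≤ H) (hℓ : 0 ≤ ℓ)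
    (hA : ∀ t ∈ Ioo x y, |f' t| ≤ H * ℓ ^ (s - 1)) {k : ℕ}
    (hk : (Ioo x y ∩ f' ⁻¹' {0}).encard < k) :
    volume (glaeserSet f f' s ∩ Ioo x y) ≤
      k * (4 * ENNReal.ofReal (s * H ^ (s - 1)⁻¹)) * ENNReal.ofReal (ℓ / 2) := by
  have hroot : s * (H * ℓ ^ (s - 1)) ^ (s - 1)⁻¹ = 2 * (s * H ^ (s - 1)⁻¹ * (ℓ / 2)) := by
    rw [Real.mul_rpow hH (by positivity), Real.rpow_rpow_inv hℓ (sub_pos.2 hs).ne']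
    ring
  have hsH : 0 ≤ s * H ^ (s - 1)⁻¹ := by positivity
  calc volume (glaeserSet f f' s ∩ Ioo x y)
      ≤ k * (2 * ENNReal.ofReal (s * (H * ℓ ^ (s - 1)) ^ (s - 1)⁻¹)) :=
        volume_inter_Ioo_le_of_encard_zeros_lt hs hf hf' hA hk
    _ = k * (4 * ENNReal.ofReal (s * H ^ (s - 1)⁻¹)) * ENNReal.ofReal (ℓ / 2) := by
      rw [hroot, ENNReal.ofReal_mul zero_le_two, ENNReal.ofReal_mul hsH, ENNReal.ofReal_ofNat]
      ring

end Interval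

end glaeserSet

lemma exists_pos_mul_rpow_lt (H : ℝ) {q ε : ℝ} (hq : 0 < q) (hε : 0 < ε) :
    ∃ δ, 0 < δ ∧ H * δ ^ q < ε := by
  have hlim := ((Real.continuousAt_rpow_const 0 q (.inr hq.le)).const_mul H).tendsto
  rw [Real.zero_rpow hq.ne', mul_zero] at hlim
  have hsmall : ∀ᶠ δ in nhdsWithin 0 (Ioi 0), H * δ ^ q < ε :=
    (hlim.mono_left nhdsWithin_le_nhds).eventually_lt_const hε
  exact (eventually_mem_nhdsWithin.and hsmall).exists

lemma abs_re_rpow_lt_or_abs_im_rpow_lt {z w : ℂ} {p r : ℝ} (hp : 0 ≤ p) (hr : 0 < r)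
    (h : r * ‖z‖ ^ p < ‖w‖) : |z.re| ^ p < 2 / r * |w.re| ∨ |z.im| ^ p < 2 / r * |w.im| := by
  by_contra! hle
  have hre : |z.re| ^ p ≤ ‖z‖ ^ p := by
    gcongr
    exact Complex.abs_re_le_norm z
  have him : |z.im| ^ p ≤ ‖z‖ ^ p := by
    gcongr
    exact Complex.abs_im_le_norm z
  have hlt : r * ‖z‖ ^ p < r * ‖z‖ ^ p :=
    calc r * ‖z‖ ^ p < |w.re| + |w.im| := h.trans_le (Complex.norm_le_abs_re_add_abs_im w)
      _ = r / 2 * (2 / r * |w.re| + 2 / r * |w.im|) := by field_simp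
      _ ≤ r / 2 * (‖z‖ ^ p + ‖z‖ ^ p) := by
        gcongr
        · exact hle.1.trans hre
        · exact hle.2.trans him
      _ = r * ‖z‖ ^ p := by ring
  exact hlt.false

namespace HolderChain

variable {k : ℕ} {a b α s H A : ℝ}

section Real

variable {d : ℕ → ℝ → ℝ}

/- Intervals with at least `k` zeros of `d 1` are halved until the bound
`|d 1| ≤ H * ℓ ^ (s - 1)` drops below `ε`. -/
lemma volume_glaeserSet_inter_setOf_le_abs_deriv_le (hd : HolderChain d k α H (Ioo a b))
    (hk : 1 ≤ k) (hα : 0 < α) (hs : s = k + α) (hH : 0 ≤ H) (hab : a < b)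
    (hzeros : (k : ℕ∞) ≤ (Ioo a b ∩ d 1 ⁻¹' {0}).encard) {ε : ℝ} (hε : 0 < ε) :
    volume (glaeserSet (d 0) (d 1) s ∩ {t | ε ≤ |d 1 t|} ∩ Ioo a b) ≤
      k * (4 * ENNReal.ofReal (s * H ^ (s - 1)⁻¹)) * ENNReal.ofReal (b - a) := by
  have hk1 : (1 : ℝ) ≤ k := by exact_mod_cast hk
  have hs1 : 1 < s := by linarith
  obtain ⟨δ, hδ, hδε⟩ := exists_pos_mul_rpow_lt H (sub_pos.2 hs1) hε
  have hbound {x y ℓ : ℝ} (hax : a ≤ x) (hyb : y ≤ b) (hxy : x < y) (hℓ : y - x ≤ ℓ)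
      (hz : (k : ℕ∞) ≤ (Ioo x y ∩ d 1 ⁻¹' {0}).encard) :
      ∀ t ∈ Ioo x y, |d 1 t| ≤ H * ℓ ^ (s - 1) := by
    have hsub : Ioo x y ⊆ Ioo a b := Ioo_subset_Ioo hax hyb
    rw [hs]
    exact (hd.mono hsub).norm_deriv_le_of_le_encard ordConnected_Ioo hk hH hα.le
      ((sub_pos.2 hxy).trans_le hℓ)
      (fun u hu v hv ↦ abs_le.2 ⟨by linarith [hu.1, hv.2], by linarith [hu.2, hv.1]⟩) hz
  refine volume_inter_Ioo_le_of_bisection (δ := δ)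
    (P := fun x y ↦ a ≤ x ∧ y ≤ b ∧ x < y ∧ (k : ℕ∞) ≤ (Ioo x y ∩ d 1 ⁻¹' {0}).encard) hδ
    ?_ ?_ hab.le ⟨le_rfl, le_rfl, hab, hzeros⟩
  · rintro x y ⟨hax, hyb, hxy, hz⟩ hlen
    convert measure_empty (μ := volume)
    refine eq_empty_of_forall_notMem fun t ht ↦ ?_
    exact (ht.1.2.trans (hbound hax hyb hxy hlen hz t ht.2)).not_gt hδε
  · rintro x y ⟨hax, hyb, hxy, hz⟩ u v hxu hvy huv
    refine (le_or_gt (k : ℕ∞) (Ioo u v ∩ d 1 ⁻¹' {0}).encard).imp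
      (fun h ↦ ⟨hax.trans hxu, hvy.trans hyb, by linarith, h⟩) fun h ↦ ?_
    have hsub : Ioo u v ⊆ Ioo a b := Ioo_subset_Ioo (hax.trans hxu) (hvy.trans hyb)
    rw [huv]
    refine (measure_mono (inter_subset_inter_left _ inter_subset_left)).trans ?_
    exact glaeserSet.volume_inter_Ioo_le_of_abs_deriv_le_mul_rpow hs1
      ((hd.mono hsub).derivChain 0 hk) ((hd.mono hsub).continuousOn hα hk) hH (sub_pos.2 hxy).le
      (fun t ht ↦ hbound hax hyb hxy le_rfl hz t (Ioo_subset_Ioo hxu hvy ht)) h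

lemma volume_glaeserSet_inter_le_of_le_encard_zeros (hd : HolderChain d k α H (Ioo a b))
    (hk : 1 ≤ k) (hα : 0 < α) (hs : s = k + α) (hH : 0 ≤ H) (hab : a < b)
    (hzeros : (k : ℕ∞) ≤ (Ioo a b ∩ d 1 ⁻¹' {0}).encard) :
    volume (glaeserSet (d 0) (d 1) s ∩ Ioo a b) ≤
      k * (4 * ENNReal.ofReal (s * H ^ (s - 1)⁻¹)) * ENNReal.ofReal (b - a) := by
  let E : ℕ → Set ℝ := fun m ↦
    glaeserSet (d 0) (d 1) s ∩ {t | 1 / ((m : ℝ) + 1) ≤ |d 1 t|} ∩ Ioo a b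
  have hmono : Monotone E := fun m n hmn ↦
    inter_subset_inter_left _ <| inter_subset_inter_right _ <| ofPred_subset_ofPred.2 fun t ht ↦
      (Nat.one_div_le_one_div hmn).trans ht
  have hsub : glaeserSet (d 0) (d 1) s ∩ Ioo a b ⊆ ⋃ m, E m := fun t ht ↦ by
    have hpos : 0 < |d 1 t| := (Real.rpow_nonneg (abs_nonneg _) _).trans_lt ht.1
    obtain ⟨m, hm⟩ := exists_nat_one_div_lt hpos
    exact mem_iUnion.2 ⟨m, ⟨ht.1, hm.le⟩, ht.2⟩
  calc volume (glaeserSet (d 0) (d 1) s ∩ Ioo a b) ≤ volume (⋃ m, E m) := measure_mono hsub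
    _ = ⨆ m, volume (E m) := hmono.measure_iUnion
    _ ≤ _ := iSup_le fun m ↦
      hd.volume_glaeserSet_inter_setOf_le_abs_deriv_le hk hα hs hH hab hzeros
        Nat.one_div_pos_of_nat

lemma volume_glaeserSet_inter_le (hd : HolderChain d k α H (Ioo a b)) (hk : 1 ≤ k)
    (hα : 0 < α) (hs : s = k + α) (hH : 0 ≤ H) (hab : a < b)
    (hA : ∀ t ∈ Ioo a b, |d 1 t| ≤ A) (hHA : H * (b - a) ^ (s - 1) ≤ A) :
    volume (glaeserSet (d 0) (d 1) s ∩ Ioo a b) ≤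
      k * (4 * ENNReal.ofReal (s * A ^ (s - 1)⁻¹)) := by
  have hk1 : (1 : ℝ) ≤ k := by exact_mod_cast hk
  have hs1 : 0 < s - 1 := by linarith
  have hs0 : 0 ≤ s := by linarith
  have hba : 0 < b - a := sub_pos.2 hab
  rcases le_or_gt (k : ℕ∞) (Ioo a b ∩ d 1 ⁻¹' {0}).encard with hz | hz
  · have hroot : H ^ (s - 1)⁻¹ * (b - a) ≤ A ^ (s - 1)⁻¹ :=
      calc H ^ (s - 1)⁻¹ * (b - a) = (H * (b - a) ^ (s - 1)) ^ (s - 1)⁻¹ := by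
            rw [Real.mul_rpow hH (by positivity), Real.rpow_rpow_inv hba.le hs1.ne']
        _ ≤ A ^ (s - 1)⁻¹ := by gcongr
    calc volume (glaeserSet (d 0) (d 1) s ∩ Ioo a b)
        ≤ k * (4 * ENNReal.ofReal (s * H ^ (s - 1)⁻¹)) * ENNReal.ofReal (b - a) :=
          hd.volume_glaeserSet_inter_le_of_le_encard_zeros hk hα hs hH hab hz
      _ = k * (4 * ENNReal.ofReal (s * (H ^ (s - 1)⁻¹ * (b - a)))) := by
        rw [← mul_assoc s, ENNReal.ofReal_mul (by positivity : 0 ≤ s * H ^ (s - 1)⁻¹)]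
        ring
      _ ≤ k * (4 * ENNReal.ofReal (s * A ^ (s - 1)⁻¹)) := by gcongr
  · refine (glaeserSet.volume_inter_Ioo_le_of_encard_zeros_lt (by linarith) (hd.derivChain 0 hk)
      (hd.continuousOn hα hk) hA hz).trans ?_
    gcongr
    norm_num

end Real

lemma volume_glaeserSet_clm_comp_inter_le {E : Type*} [NormedAddCommGroup E] [NormedSpace ℝ E]
    {d : ℕ → ℝ → E} (hd : HolderChain d k α H (Ioo a b)) (hk : 1 ≤ k) (hα : 0 < α)
    (hs : s = k + α) (hH : 0 ≤ H) (hab : a < b) (hA : ∀ t ∈ Ioo a b, ‖d 1 t‖ ≤ A)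
    (hHA : H * (b - a) ^ (s - 1) ≤ A) {L : E →L[ℝ] ℝ} {c : ℝ} (hL : ‖L‖ ≤ c) :
    volume (glaeserSet (fun t ↦ L (d 0 t)) (fun t ↦ L (d 1 t)) s ∩ Ioo a b) ≤
      k * (4 * ENNReal.ofReal (s * (c * A) ^ (s - 1)⁻¹)) := by
  have hc : 0 ≤ c := (norm_nonneg L).trans hL
  refine (hd.clm_comp hL).volume_glaeserSet_inter_le hk hα hs (mul_nonneg hc hH) hab
    (fun t ht ↦ L.le_of_opNorm_le_of_le hL (hA t ht)) ?_
  rw [mul_assoc]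
  gcongr

lemma volume_setOf_mul_rpow_lt_norm_le {d : ℕ → ℝ → ℂ} (hd : HolderChain d k α H (Ioo a b))
    (hk : 1 ≤ k) (hα : 0 < α) (hs : s = k + α) (hH : 0 ≤ H) (hab : a < b)
    (hA : ∀ t ∈ Ioo a b, ‖d 1 t‖ ≤ A) (hHA : H * (b - a) ^ (s - 1) ≤ A) {r : ℝ} (hr : 0 < r) :
    volume {t ∈ Ioo a b | r * ‖d 0 t‖ ^ (1 - s⁻¹) < ‖d 1 t‖} ≤
      8 * k * ENNReal.ofReal (s * ((2 / r) ^ s * A) ^ (s - 1)⁻¹) := by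
  have hk1 : (1 : ℝ) ≤ k := by exact_mod_cast hk
  have hs0 : 0 < s := by linarith
  have hs1 : 1 ≤ s := by linarith
  have hexp : 0 ≤ 1 - s⁻¹ := sub_nonneg.2 (inv_le_one_of_one_le₀ hs1)
  have h2r : 0 < 2 / r := by positivity
  have hcs : 0 ≤ (2 / r) ^ s := by positivity
  let R : ℂ →L[ℝ] ℝ := (2 / r) ^ s • Complex.reCLM
  let J : ℂ →L[ℝ] ℝ := (2 / r) ^ s • Complex.imCLM
  have hsub : {t ∈ Ioo a b | r * ‖d 0 t‖ ^ (1 - s⁻¹) < ‖d 1 t‖} ⊆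
      glaeserSet (fun t ↦ R (d 0 t)) (fun t ↦ R (d 1 t)) s ∩ Ioo a b ∪
        glaeserSet (fun t ↦ J (d 0 t)) (fun t ↦ J (d 1 t)) s ∩ Ioo a b := by
    rintro t ⟨ht, hlt⟩
    exact (abs_re_rpow_lt_or_abs_im_rpow_lt hexp hr hlt).imp
      (fun h ↦ ⟨(glaeserSet.mem_mul_iff hs0.ne' h2r).2 h, ht⟩)
      fun h ↦ ⟨(glaeserSet.mem_mul_iff hs0.ne' h2r).2 h, ht⟩
  have hR : ‖R‖ ≤ (2 / r) ^ s := by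
    rw [norm_smul, Complex.reCLM_norm, mul_one, Real.norm_of_nonneg hcs]
  have hJ : ‖J‖ ≤ (2 / r) ^ s := by
    rw [norm_smul, Complex.imCLM_norm, mul_one, Real.norm_of_nonneg hcs]
  calc volume {t ∈ Ioo a b | r * ‖d 0 t‖ ^ (1 - s⁻¹) < ‖d 1 t‖}
      ≤ k * (4 * ENNReal.ofReal (s * ((2 / r) ^ s * A) ^ (s - 1)⁻¹)) +
        k * (4 * ENNReal.ofReal (s * ((2 / r) ^ s * A) ^ (s - 1)⁻¹)) :=
      (measure_mono hsub).trans <| (measure_union_le _ _).trans <| add_le_add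
        (hd.volume_glaeserSet_clm_comp_inter_le hk hα hs hH hab hA hHA hR)
        (hd.volume_glaeserSet_clm_comp_inter_le hk hα hs hH hab hA hHA hJ)
    _ = 8 * k * ENNReal.ofReal (s * ((2 / r) ^ s * A) ^ (s - 1)⁻¹) := by ring

end HolderChain

lemma mul_rpow_inv_le_of_le_mul_div_rpow {p N B r V : ℝ} (hp : 1 ≤ p) (hN : 1 ≤ N) (hB : 0 ≤ B)
    (hr : 0 < r) (hV : 0 ≤ V) (h : V ≤ N * (B / r) ^ p) : r * V ^ p⁻¹ ≤ N * B := by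
  have hp0 : 0 < p := by linarith
  have hroot : V ^ p⁻¹ ≤ N * (B / r) := by
    rw [Real.rpow_inv_le_iff_of_pos hV (by positivity) hp0,
      Real.mul_rpow (by positivity) (by positivity)]
    refine h.trans ?_
    gcongr
    exact Real.self_le_rpow_of_one_le hN hp
  calc r * V ^ p⁻¹ ≤ r * (N * (B / r)) := by gcongr
    _ = N * B := by field_simp

/-- The smallest `Λ ≥ 0` with `‖f'‖ ≤ Λ * ‖f‖ ^ (1 - 1 / s)` on `I`, extended by zero. At zeros of
`f` it is `0` by the convention on division; where also `f' ≠ 0` the inequality fails, but such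
points are isolated zeros of `f`. -/
def glaeserQuotient {E : Type*} [NormedAddCommGroup E] (f f' : ℝ → E) (s : ℝ) (I : Set ℝ) :
    ℝ → ℝ :=
  I.indicator fun t ↦ ‖f' t‖ / ‖f t‖ ^ (1 - s⁻¹)

namespace glaeserQuotient

variable {E : Type*} [NormedAddCommGroup E] {f f' : ℝ → E} {s : ℝ} {I : Set ℝ}

lemma nonneg (t : ℝ) : 0 ≤ glaeserQuotient f f' s I t :=
  indicator_nonneg (fun t _ ↦ by positivity) t

lemma measurable (hI : MeasurableSet I) (hf : ContinuousOn f I) (hf' : ContinuousOn f' I) :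
    Measurable (glaeserQuotient f f' s I) := by
  refine measurable_of_restrict_of_restrict_compl hI ?_ ?_
  · rw [glaeserQuotient, domRestrict_eq_domRestrict_iff.2 eqOn_indicator]
    exact hf'.norm.domRestrict.measurable.div (hf.norm.domRestrict.measurable.pow_const _)
  · rw [glaeserQuotient, domRestrict_eq_domRestrict_iff.2 eqOn_indicator']
    exact measurable_const

lemma ae_norm_deriv_le [NormedSpace ℝ E] (hI : MeasurableSet I)
    (hf : ∀ t ∈ I, HasDerivWithinAt f (f' t) I t) :
    ∀ᵐ t ∂volume.restrict I, ‖f' t‖ ≤ glaeserQuotient f f' s I t * ‖f t‖ ^ (1 - s⁻¹) := by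
  rw [ae_restrict_iff' hI]
  filter_upwards [(countable_setOf_eq_zero_and_deriv_ne_zero hf).ae_notMem volume] with t ht htI
  rw [glaeserQuotient, indicator_of_mem htI]
  by_cases hft : f t = 0
  · have hf't : f' t = 0 := not_not.1 fun h ↦ ht ⟨htI, hft, h⟩
    simp [hf't]
  · have hpos : 0 < ‖f t‖ ^ (1 - s⁻¹) := Real.rpow_pos_of_pos (norm_pos_iff.2 hft) _
    rw [div_mul_cancel₀ _ hpos.ne']

lemma setOf_lt_subset {r : ℝ} (hr : 0 ≤ r) :
    {t ∈ I | r < glaeserQuotient f f' s I t} ⊆ {t ∈ I | r * ‖f t‖ ^ (1 - s⁻¹) < ‖f' t‖} := by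
  rintro t ⟨htI, ht⟩
  rw [glaeserQuotient, indicator_of_mem htI] at ht
  refine ⟨htI, (lt_div_iff₀ ?_).1 ht⟩
  refine (Real.rpow_nonneg (norm_nonneg _) _).lt_of_ne' fun h0 ↦ ?_
  rw [h0, div_zero] at ht
  exact ht.not_ge hr

end glaeserQuotient

namespace HolderChain

variable {k : ℕ} {a b α s H : ℝ} {d : ℕ → ℝ → ℂ}

lemma mul_toReal_volume_rpow_le (hd : HolderChain d k α H (Ioo a b)) (hk : 1 ≤ k) (hα : 0 < α)
    (hs : s = k + α) (hH : 0 ≤ H) (hab : a < b) {M : ℝ} (hM : 0 ≤ M)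
    (hdM : ∀ t ∈ Ioo a b, ‖d 1 t‖ ≤ M ^ s) (hHM : H * (b - a) ^ (s - 1) ≤ M ^ s) {r : ℝ}
    (hr : 0 ≤ r) :
    r * (volume {t ∈ Ioo a b | r < glaeserQuotient (d 0) (d 1) s (Ioo a b) t}).toReal ^
        (s / (s - 1))⁻¹ ≤ 16 * k * s * M := by
  have hk1 : (1 : ℝ) ≤ k := by exact_mod_cast hk
  have hs1 : 0 < s - 1 := by linarith
  have hs0 : 0 < s := by linarith
  rcases hr.eq_or_lt with rfl | hr
  · rw [zero_mul]
    positivity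
  have hroot : ((2 / r) ^ s * M ^ s) ^ (s - 1)⁻¹ = (2 * M / r) ^ (s / (s - 1)) := by
    rw [← Real.mul_rpow (by positivity) hM, ← Real.rpow_mul (by positivity), ← div_eq_mul_inv,
      div_mul_eq_mul_div]
  have hvol : volume {t ∈ Ioo a b | r < glaeserQuotient (d 0) (d 1) s (Ioo a b) t} ≤
      ENNReal.ofReal (8 * k * s * (2 * M / r) ^ (s / (s - 1))) :=
    calc _ ≤ volume {t ∈ Ioo a b | r * ‖d 0 t‖ ^ (1 - s⁻¹) < ‖d 1 t‖} :=
          measure_mono (glaeserQuotient.setOf_lt_subset hr.le)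
      _ ≤ 8 * k * ENNReal.ofReal (s * ((2 / r) ^ s * M ^ s) ^ (s - 1)⁻¹) :=
          hd.volume_setOf_mul_rpow_lt_norm_le hk hα hs hH hab hdM hHM hr
      _ = ENNReal.ofReal (8 * k * s * (2 * M / r) ^ (s / (s - 1))) := by
        rw [hroot, mul_assoc (8 * (k : ℝ)), ENNReal.ofReal_mul (p := 8 * (k : ℝ)) (by positivity),
          ENNReal.ofReal_mul (p := 8) (by norm_num), ENNReal.ofReal_ofNat, ENNReal.ofReal_natCast]
  calc _ ≤ 8 * k * s * (2 * M) :=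
        mul_rpow_inv_le_of_le_mul_div_rpow ((one_le_div hs1).2 (by linarith)) (by nlinarith)
          (by positivity) hr ENNReal.toReal_nonneg
          (ENNReal.toReal_le_of_le_ofReal (by positivity) hvol)
    _ = 16 * k * s * M := by ring

lemma mul_toReal_volume_rpow_le_mul_max (hd : HolderChain d k α H (Ioo a b)) (hk : 1 ≤ k)
    (hα : 0 < α) (hs : s = k + α) (hH : 0 ≤ H) (hab : a < b) {G : ℝ} (hG : 0 ≤ G)
    (hdG : ∀ t ∈ Ioo a b, ‖d 1 t‖ ≤ G) {r : ℝ} (hr : 0 ≤ r) :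
    r * (volume {t ∈ Ioo a b | r < glaeserQuotient (d 0) (d 1) s (Ioo a b) t}).toReal ^
        (s / (s - 1))⁻¹ ≤
      16 * k * s * max (H ^ s⁻¹ * (b - a) ^ (s / (s - 1))⁻¹) (G ^ s⁻¹) := by
  have hk1 : (1 : ℝ) ≤ k := by exact_mod_cast hk
  have hs0 : 0 < s := by linarith
  have hba : 0 ≤ b - a := sub_nonneg.2 hab.le
  have hM : 0 ≤ max (H ^ s⁻¹ * (b - a) ^ (s / (s - 1))⁻¹) (G ^ s⁻¹) :=
    (Real.rpow_nonneg hG _).trans (le_max_right _ _)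
  refine hd.mul_toReal_volume_rpow_le hk hα hs hH hab hM (fun t ht ↦ (hdG t ht).trans ?_) ?_ hr
  · exact (Real.rpow_inv_le_iff_of_pos hG hM hs0).1 (le_max_right _ _)
  · refine (Real.rpow_inv_le_iff_of_pos (by positivity) hM hs0).1 ((le_max_left _ _).trans_eq' ?_)
    rw [Real.mul_rpow hH (by positivity), ← Real.rpow_mul hba, inv_div, div_eq_mul_inv]

end HolderChain

/-- For `g ∈ C^{k,α}(Ī,ℂ)` there is a nonnegative measurable `Λ ∈ L^p_w(I)`,
`p = (k+α)/(k+α-1)`, with `|g'| ≤ Λ |g|^{1-1/(k+α)}` a.e. on `I` and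
`‖Λ‖_{p,w,I} ≤ C(k) max{Höld_{α,I}(g^{(k)})^{1/(k+α)} |I|^{1/p}, ‖g'‖_∞^{1/(k+α)}}`. -/
theorem radical_glaeser (k : ℕ) (hk : 1 ≤ k) :
    ∃ C : ℝ, 0 < C ∧
      ∀ (αe : ℝ), 0 < αe → αe ≤ 1 →
      ∀ (a b : ℝ), a < b →
      ∀ d : ℕ → ℝ → ℂ,
      DerivChain d k (Icc a b) →
      ContinuousOn (d k) (Icc a b) →
      (∃ H : ℝ, ∀ x ∈ Ioo a b, ∀ y ∈ Ioo a b, ‖d k x - d k y‖ ≤ H * |x - y| ^ αe) →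
      ∃ Λ : ℝ → ℝ, Measurable Λ ∧ (∀ t, 0 ≤ Λ t) ∧
        (∀ᵐ t ∂(volume.restrict (Ioo a b)),
          ‖d 1 t‖ ≤ Λ t * ‖d 0 t‖ ^ (1 - ((k : ℝ) + αe)⁻¹)) ∧
        ∀ r : ℝ, 0 ≤ r →
          r * (volume {t | t ∈ Ioo a b ∧ r < Λ t}).toReal ^
              (1 / (((k : ℝ) + αe) / ((k : ℝ) + αe - 1))) ≤
            C * max
              ((HolderConst αe (Ioo a b) (d k)) ^ (((k : ℝ) + αe)⁻¹) *
                (b - a) ^ (1 / (((k : ℝ) + αe) / ((k : ℝ) + αe - 1))))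
              ((sSup ((fun x => ‖d 1 x‖) '' Ioo a b)) ^ (((k : ℝ) + αe)⁻¹)) := by
  refine ⟨16 * k * (k + 1), by positivity, fun α hα hα1 a b hab d hd hdk hhol ↦ ?_⟩
  have hsub : Ioo a b ⊆ Icc a b := Ioo_subset_Icc_self
  have hdI : HolderChain d k α (HolderConst α (Ioo a b) (d k)) (Ioo a b) :=
    ⟨hd.mono hsub, norm_sub_le_holderConst_mul hhol⟩
  have hbdd : BddAbove ((fun t ↦ ‖d 1 t‖) '' Ioo a b) :=
    (isCompact_Icc.bddAbove_image (hd.continuousOn hdk hk).norm).mono (image_mono hsub)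
  have hsup : 0 ≤ sSup ((fun t ↦ ‖d 1 t‖) '' Ioo a b) :=
    Real.sSup_nonneg (forall_mem_image.2 fun t _ ↦ norm_nonneg (d 1 t))
  refine ⟨glaeserQuotient (d 0) (d 1) (k + α) (Ioo a b),
    glaeserQuotient.measurable measurableSet_Ioo (hdI.continuousOn hα k.zero_le)
      (hdI.continuousOn hα hk),
    glaeserQuotient.nonneg,
    glaeserQuotient.ae_norm_deriv_le measurableSet_Ioo (hdI.derivChain 0 hk), fun r hr ↦ ?_⟩
  rw [one_div]
  refine (hdI.mul_toReal_volume_rpow_le_mul_max hk hα rfl holderConst_nonneg hab hsup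
    (fun t ht ↦ le_csSup hbdd (mem_image_of_mem _ ht)) hr).trans ?_
  gcongr
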